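/- Let V : ℝ → ℝ be measurable with ∫_ℝ (1 + |t|) |V(t)| dt < ∞. With η(u) = ∫_u^∞ |V(t)| dt, γ_1(x) = ∫_x^∞ (t-x)|V(t)| dt, and the iterates K_0(x,y) = ∫_{x+y}^∞ V(t) dt, K_{n+1}(x,y) = ∫_0^y ∫_{x+y-z}^∞ V(t) K_n(t,z) dt dz, the series B_1(x,y) = Σ_{n≥0} K_n(x,y) converges absolutely for every x ≥ 0, y ≥ 0, and satisfies the bound |B_1(x,y)| ≤ e^{γ_1(x)} ∫_{x+y}^∞ |V(t)| dt. -/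

import Mathlib

open MeasureTheory Set

/-- `η(u) = ∫_u^∞ |V(t)| dt`. -/
noncomputable def etaV (V : ℝ → ℝ) (u : ℝ) : ℝ := ∫ t in Ioi u, |V t|

/-- `γ₁(x) = ∫_x^∞ (t - x)|V(t)| dt`. -/
noncomputable def gammaOne (V : ℝ → ℝ) (x : ℝ) : ℝ := ∫ t in Ioi x, (t - x) * |V t|

/-- The Deift–Trubowitz iterates: `K₀(x,y) = ∫_{x+y}^∞ V(t) dt` and
`K_{n+1}(x,y) = ∫_0^y ∫_{x+y-z}^∞ V(t) Kₙ(t,z) dt dz`. -/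
noncomputable def DTiter (V : ℝ → ℝ) : ℕ → ℝ → ℝ → ℝ
  | 0, x, y => ∫ t in Ioi (x + y), V t
  | n + 1, x, y => ∫ z in Ioc (0 : ℝ) y, ∫ t in Ioi (x + y - z), V t * DTiter V n t z

/-!
By induction `|Kₙ(x,y)| ≤ γ₁(x)ⁿ / n! * η(x + y)`, and these bounds sum to `exp (γ₁(x)) * η(x + y)`.
In `Kₙ₊₁` the inner variable satisfies `t ≥ x + y - z`, so `η(t + z) ≤ η(x + y)` comes out of both
integrals and it remains to integrate `γ₁ⁿ η` over `[x, x + y]`. Since `γ₁' = -η`, this integrand is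
the derivative of `-γ₁ⁿ⁺¹ / (n + 1)`, whose increment is at most `γ₁(x)ⁿ⁺¹ / (n + 1)`.
-/

section WeightedIntegrals

variable {α 𝕜 : Type*} {mα : MeasurableSpace α} {μ : Measure α} [NormedDivisionRing 𝕜]

lemma integrable_mul_of_norm_le_mul_norm {w g f : α → 𝕜} {C : ℝ}
    (hw : AEStronglyMeasurable w μ) (hg : AEStronglyMeasurable g μ)
    (hgw : ∀ a, ‖g a‖ ≤ C * ‖w a‖) (hf : Integrable (fun a => w a * f a) μ) :
    Integrable (fun a => g a * f a) μ := by
  have h_ratio : ∀ a, ‖g a * (w a)⁻¹‖ ≤ |C| := fun a => by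
    rw [norm_mul, norm_inv, ← div_eq_mul_inv]
    exact div_le_of_le_mul₀ (norm_nonneg _) (abs_nonneg C)
      ((hgw a).trans (mul_le_mul_of_nonneg_right (le_abs_self C) (norm_nonneg _)))
  refine (hf.bdd_mul (hg.mul hw.inv₀) (.of_forall h_ratio)).congr (.of_forall fun a => ?_)
  rcases eq_or_ne (w a) 0 with hwa | hwa
  · have hga : g a = 0 := by simpa [hwa] using hgw a
    simp [hga]
  · simp [mul_assoc, hwa]

lemma integrable_mul_abs_iff {w f : α → ℝ} (hw : AEStronglyMeasurable w μ)
    (hf : AEStronglyMeasurable f μ) :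
    Integrable (fun a => w a * |f a|) μ ↔ Integrable (fun a => w a * f a) μ := by
  have hf_abs : AEStronglyMeasurable (fun a => |f a|) μ := hf.norm
  rw [← integrable_norm_iff (hw.fun_mul hf_abs), ← integrable_norm_iff (hw.fun_mul hf)]
  simp only [norm_mul, Real.norm_eq_abs, abs_abs]

lemma norm_integral_mul_le_mul_integral_norm {R : Type*} [NonUnitalNormedRing R]
    [NormedSpace ℝ R] {f k : α → R} {C : ℝ} (hf : Integrable f μ) (hk : ∀ᵐ a ∂μ, ‖k a‖ ≤ C) :
    ‖∫ a, f a * k a ∂μ‖ ≤ C * ∫ a, ‖f a‖ ∂μ := by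
  rw [← integral_const_mul]
  refine norm_integral_le_of_norm_le (hf.norm.const_mul C) (hk.mono fun a ha => ?_)
  calc ‖f a * k a‖ ≤ ‖f a‖ * ‖k a‖ := norm_mul_le _ _
    _ ≤ C * ‖f a‖ := by rw [mul_comm]; gcongr

end WeightedIntegrals

section PositivePart

lemma hasDerivAt_max_sub_zero {x t : ℝ} (hxt : t ≠ x) :
    HasDerivAt (fun s => max (t - s) 0) (if x < t then -1 else 0) x := by
  rcases lt_or_gt_of_ne hxt with h | h
  · rw [if_neg h.not_gt]
    refine (hasDerivAt_const x 0).congr_of_eventuallyEq ?_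
    filter_upwards [lt_mem_nhds h] with s hs using max_eq_right (sub_nonpos.mpr hs.le)
  · rw [if_pos h]
    refine ((hasDerivAt_id x).const_sub t).congr_of_eventuallyEq ?_
    filter_upwards [gt_mem_nhds h] with s hs using max_eq_left (sub_nonneg.mpr hs.le)

lemma lipschitzWith_max_sub_zero (t : ℝ) : LipschitzWith 1 (fun s => max (t - s) 0) :=
  ((LipschitzWith.const t).sub .id).max_const 0 |>.weaken (by simp)

variable {E : Type*} [NormedAddCommGroup E] [NormedSpace ℝ E]

lemma hasDerivAt_integral_max_sub_zero_smul {μ : Measure ℝ} [NullSingletonClass μ] {f : ℝ → E}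
    {x : ℝ} (hf : Integrable f μ) (hfx : Integrable (fun t => max (t - x) 0 • f t) μ) :
    HasDerivAt (fun s => ∫ t, max (t - s) 0 • f t ∂μ) (-∫ t in Ioi x, f t ∂μ) x := by
  rw [← integral_neg, ← integral_indicator measurableSet_Ioi]
  refine (hasDerivAt_integral_of_dominated_loc_of_lip (bound := fun t => ‖f t‖) Filter.univ_mem
    (.of_forall fun s => ?_) hfx (hf.neg.indicator measurableSet_Ioi).aestronglyMeasurable
    (.of_forall fun t => ?_) hf.norm ?_).2
  · exact (by fun_prop : Measurable fun t : ℝ => max (t - s) 0).aestronglyMeasurable.smul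
      hf.aestronglyMeasurable
  · refine LipschitzOnWith.of_dist_le_mul fun a _ b _ => ?_
    rw [dist_eq_norm, ← sub_smul, norm_smul, mul_comm]
    have h_lip := (lipschitzWith_max_sub_zero t).dist_le_mul a b
    rw [NNReal.coe_one, one_mul, dist_eq_norm] at h_lip
    simpa using mul_le_mul_of_nonneg_left h_lip (norm_nonneg (f t))
  · filter_upwards [Measure.ae_ne μ x] with t ht
    refine ((hasDerivAt_max_sub_zero ht).smul_const (f t)).congr_deriv ?_
    by_cases hxt : x < t <;> simp [hxt]

end PositivePart

section EtaGamma

variable {V : ℝ → ℝ} {a : ℝ}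

lemma etaV_nonneg (V : ℝ → ℝ) (x : ℝ) : 0 ≤ etaV V x :=
  integral_nonneg fun _ => abs_nonneg _

lemma gammaOne_nonneg (V : ℝ → ℝ) (x : ℝ) : 0 ≤ gammaOne V x :=
  setIntegral_nonneg measurableSet_Ioi fun _ ht =>
    mul_nonneg (sub_nonneg.mpr (mem_Ioi.mp ht).le) (abs_nonneg _)

lemma gammaOne_eq_integral_max (V : ℝ → ℝ) {x : ℝ} (hx : a ≤ x) :
    gammaOne V x = ∫ t in Ioi a, max (t - x) 0 * |V t| := by
  have h_off : ∀ t ∈ Ioi a \ Ioi x, max (t - x) 0 * |V t| = 0 := fun t ht => by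
    rw [max_eq_right (sub_nonpos.mpr (not_lt.mp ht.2)), zero_mul]
  rw [setIntegral_eq_of_subset_of_forall_sdiff_eq_zero measurableSet_Ioi (Ioi_subset_Ioi hx) h_off]
  refine setIntegral_congr_fun measurableSet_Ioi fun t ht => ?_
  rw [max_eq_left (sub_nonneg.mpr (mem_Ioi.mp ht).le)]

lemma integrableOn_of_one_add_abs_mul (hV : IntegrableOn (fun t => (1 + |t|) * V t) (Ioi a)) :
    IntegrableOn V (Ioi a) := by
  have h_weight (t : ℝ) : ‖(1 : ℝ)‖ ≤ 1 * ‖1 + |t|‖ := by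
    simpa using (le_add_of_nonneg_right (abs_nonneg t)).trans (le_abs_self _)
  simpa [IntegrableOn] using
    integrable_mul_of_norm_le_mul_norm (by fun_prop) (by fun_prop) h_weight hV

lemma integrableOn_max_sub_zero_mul_abs
    (hV : IntegrableOn (fun t => (1 + |t|) * V t) (Ioi a)) (x : ℝ) :
    IntegrableOn (fun t => max (t - x) 0 * |V t|) (Ioi a) := by
  have h_weight (t : ℝ) : ‖max (t - x) 0‖ ≤ (1 + |x|) * ‖1 + |t|‖ := by
    rw [Real.norm_of_nonneg (le_max_right _ _), Real.norm_of_nonneg (by positivity)]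
    refine max_le ?_ (by positivity)
    nlinarith [le_abs_self t, neg_abs_le x, mul_nonneg (abs_nonneg x) (abs_nonneg t)]
  have h := integrable_mul_of_norm_le_mul_norm (by fun_prop) (by fun_prop) h_weight hV
  simpa only [IntegrableOn, abs_mul, abs_of_nonneg (le_max_right (_ : ℝ) 0)] using h.abs

lemma continuousOn_etaV (hV : IntegrableOn V (Ioi a)) : ContinuousOn (etaV V) (Ici a) :=
  IntegrableOn.continuousOn_Ici_primitive_Ioi hV.abs

lemma antitoneOn_etaV (hV : IntegrableOn V (Ioi a)) : AntitoneOn (etaV V) (Ici a) :=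
  fun _ hx _ _ hxy => setIntegral_mono_set (IntegrableOn.mono_set hV.abs (Ioi_subset_Ioi hx))
    (.of_forall fun _ => abs_nonneg _) (Ioi_subset_Ioi hxy).eventuallyLE

lemma hasDerivWithinAt_gammaOne (hV : IntegrableOn (fun t => (1 + |t|) * V t) (Ioi a)) {x : ℝ}
    (hx : a ≤ x) : HasDerivWithinAt (gammaOne V) (-etaV V x) (Ici a) x := by
  have h := hasDerivAt_integral_max_sub_zero_smul (integrableOn_of_one_add_abs_mul hV).abs
    (integrableOn_max_sub_zero_mul_abs hV x)
  rw [Measure.restrict_restrict_of_subset (Ioi_subset_Ioi hx)] at h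
  exact h.hasDerivWithinAt.congr (fun s hs => gammaOne_eq_integral_max V hs)
    (gammaOne_eq_integral_max V hx)

lemma continuousOn_gammaOne (hV : IntegrableOn (fun t => (1 + |t|) * V t) (Ioi a)) :
    ContinuousOn (gammaOne V) (Ici a) :=
  fun _ hx => (hasDerivWithinAt_gammaOne hV hx).continuousWithinAt

lemma antitoneOn_gammaOne (hV : IntegrableOn (fun t => (1 + |t|) * V t) (Ioi a)) :
    AntitoneOn (gammaOne V) (Ici a) :=
  antitoneOn_of_hasDerivWithinAt_nonpos (convex_Ici a) (continuousOn_gammaOne hV)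
    (fun _ hx => (hasDerivWithinAt_gammaOne hV (interior_subset hx)).mono interior_subset)
    fun x _ => neg_nonpos.mpr (etaV_nonneg V x)

lemma integral_gammaOne_pow_mul_etaV (hV : IntegrableOn (fun t => (1 + |t|) * V t) (Ioi a))
    {b : ℝ} (hab : a ≤ b) (n : ℕ) :
    ∫ s in a..b, gammaOne V s ^ n * etaV V s =
      (gammaOne V a ^ (n + 1) - gammaOne V b ^ (n + 1)) / (n + 1) := by
  have h_sub : uIcc a b ⊆ Ici a := by rw [uIcc_of_le hab]; exact Icc_subset_Ici_self
  have h_deriv : ∀ s ∈ Ioo (min a b) (max a b),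
      HasDerivWithinAt (gammaOne V) (-etaV V s) (Ioi s) s := fun s hs => by
    have has : a ≤ s := (min_eq_left hab ▸ hs.1).le
    exact (hasDerivWithinAt_gammaOne hV has).mono (Ioi_subset_Ici has)
  have h := intervalIntegral.integral_comp_mul_deriv'' (f' := fun s => -etaV V s)
    (g := fun u => u ^ n) ((continuousOn_gammaOne hV).mono h_sub)
    h_deriv ((continuousOn_etaV (integrableOn_of_one_add_abs_mul hV)).neg.mono h_sub)
    (by fun_prop)
  simp only [Function.comp_apply, mul_neg, intervalIntegral.integral_neg, integral_pow] at h
  rw [neg_eq_iff_eq_neg.mp h]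
  ring

lemma intervalIntegrable_gammaOne_pow_mul_etaV_comp_sub
    (hV : IntegrableOn (fun t => (1 + |t|) * V t) (Ioi a)) {y : ℝ} (hy : 0 ≤ y) (n : ℕ) :
    IntervalIntegrable (fun z => gammaOne V (a + y - z) ^ n * etaV V (a + y - z)) volume 0 y := by
  have h_cont : ContinuousOn (fun s => gammaOne V s ^ n * etaV V s) (Ici a) :=
    ((continuousOn_gammaOne hV).pow n).mul (continuousOn_etaV (integrableOn_of_one_add_abs_mul hV))
  refine (h_cont.comp (f := fun z => a + y - z) (by fun_prop) fun z hz => ?_).intervalIntegrable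
  rw [uIcc_of_le hy] at hz
  exact mem_Ici.mpr (by linarith [hz.2])

lemma integral_gammaOne_pow_mul_etaV_comp_sub_le
    (hV : IntegrableOn (fun t => (1 + |t|) * V t) (Ioi a)) {y : ℝ} (hy : 0 ≤ y) (n : ℕ) :
    ∫ z in (0 : ℝ)..y, gammaOne V (a + y - z) ^ n * etaV V (a + y - z) ≤
      gammaOne V a ^ (n + 1) / (n + 1) := by
  rw [intervalIntegral.integral_comp_sub_left (fun s => gammaOne V s ^ n * etaV V s),
    add_sub_cancel_right, sub_zero, integral_gammaOne_pow_mul_etaV hV (le_add_of_nonneg_right hy)]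
  gcongr
  exact sub_le_self _ (pow_nonneg (gammaOne_nonneg V (a + y)) _)

end EtaGamma

section Iterates

variable {V : ℝ → ℝ} {a x y : ℝ}

lemma abs_integral_mul_le_of_abs_le_gammaOne_pow_mul_etaV {k : ℝ → ℝ} {c u z : ℝ} {n : ℕ}
    (hV : IntegrableOn (fun t => (1 + |t|) * V t) (Ioi u)) (hc : 0 ≤ c) (hz : 0 ≤ z)
    (hk : ∀ t, u < t → |k t| ≤ c * (gammaOne V t ^ n * etaV V (t + z))) :
    |∫ t in Ioi u, V t * k t| ≤ c * (gammaOne V u ^ n * etaV V (u + z)) * etaV V u := by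
  have hV₀ := integrableOn_of_one_add_abs_mul hV
  refine norm_integral_mul_le_mul_integral_norm hV₀ ?_
  filter_upwards [ae_restrict_mem measurableSet_Ioi] with t (hut : u < t)
  have hγ : gammaOne V t ≤ gammaOne V u := antitoneOn_gammaOne hV self_mem_Ici hut.le hut.le
  have hη : etaV V (t + z) ≤ etaV V (u + z) :=
    antitoneOn_etaV hV₀ (mem_Ici.mpr (by linarith)) (mem_Ici.mpr (by linarith)) (by linarith)
  have hγt_nonneg := gammaOne_nonneg V t
  have hγu_nonneg := gammaOne_nonneg V u
  have hηt_nonneg := etaV_nonneg V (t + z)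
  exact (hk t hut).trans (by gcongr)

lemma abs_DTiter_le (hV : IntegrableOn (fun t => (1 + |t|) * V t) (Ioi a)) (n : ℕ) (hx : a ≤ x)
    (hy : 0 ≤ y) :
    |DTiter V n x y| ≤ gammaOne V x ^ n / n.factorial * etaV V (x + y) := by
  induction n generalizing x y with
  | zero => simpa [DTiter, etaV] using abs_integral_le_integral_abs
  | succ n ih =>
    have hVx := hV.mono_set (Ioi_subset_Ioi hx)
    set c := etaV V (x + y) / n.factorial with hc
    have hc_nonneg : 0 ≤ c := div_nonneg (etaV_nonneg V _) (Nat.cast_nonneg _)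
    have h_inner : ∀ z ∈ Ioc 0 y, ‖∫ t in Ioi (x + y - z), V t * DTiter V n t z‖ ≤
        c * (gammaOne V (x + y - z) ^ n * etaV V (x + y - z)) := fun z hz => by
      have hu : a ≤ x + y - z := by linarith [hz.2]
      have h := abs_integral_mul_le_of_abs_le_gammaOne_pow_mul_etaV
        (hV.mono_set (Ioi_subset_Ioi hu)) (inv_nonneg.mpr (Nat.cast_nonneg n.factorial)) hz.1.le
        fun t ht => (ih (hu.trans ht.le) hz.1.le).trans_eq (by ring)
      rw [sub_add_cancel] at h
      exact h.trans_eq (by ring)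
    calc |DTiter V (n + 1) x y|
        ≤ ∫ z in (0 : ℝ)..y, c * (gammaOne V (x + y - z) ^ n * etaV V (x + y - z)) := by
          rw [DTiter, ← intervalIntegral.integral_of_le hy]
          exact intervalIntegral.norm_integral_le_of_norm_le hy (.of_forall h_inner)
            ((intervalIntegrable_gammaOne_pow_mul_etaV_comp_sub hVx hy n).const_mul c)
      _ ≤ c * (gammaOne V x ^ (n + 1) / (n + 1)) := by
          rw [intervalIntegral.integral_const_mul]
          gcongr
          exact integral_gammaOne_pow_mul_etaV_comp_sub_le hVx hy n
      _ = gammaOne V x ^ (n + 1) / (n + 1).factorial * etaV V (x + y) := by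
          rw [hc, Nat.factorial_succ]
          push_cast
          field_simp

theorem DT_series_bound_general (hV : IntegrableOn (fun t => (1 + |t|) * V t) (Ioi x))
    (hy : 0 ≤ y) :
    Summable (fun n : ℕ => |DTiter V n x y|) ∧
      |∑' n : ℕ, DTiter V n x y| ≤ Real.exp (gammaOne V x) * ∫ t in Ioi (x + y), |V t| := by
  have h_bound := fun n => abs_DTiter_le hV n le_rfl hy
  have h_sum : HasSum (fun n : ℕ => gammaOne V x ^ n / n.factorial * etaV V (x + y))
      (Real.exp (gammaOne V x) * etaV V (x + y)) := by
    rw [Real.exp_eq_exp_ℝ]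
    exact (NormedSpace.expSeries_div_hasSum_exp (gammaOne V x)).mul_right _
  exact ⟨.of_nonneg_of_le (fun _ => abs_nonneg _) h_bound h_sum.summable,
    tsum_of_norm_bounded (f := fun n => DTiter V n x y) h_sum h_bound⟩

end Iterates

/-- Convergence of the Deift–Trubowitz series and the bound (A.2) of the paper: for `V` with
`∫ (1+|t|)|V(t)| dt < ∞`, the series `B₁(x,y) = Σₙ Kₙ(x,y)` converges absolutely for all
`x, y ≥ 0` and `|B₁(x,y)| ≤ e^{γ₁(x)} ∫_{x+y}^∞ |V(t)| dt`. -/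
theorem DT_series_bound (V : ℝ → ℝ) (hV : Measurable V)
    (hV1 : MeasureTheory.Integrable (fun t => (1 + |t|) * |V t|)) :
    ∀ x : ℝ, 0 ≤ x → ∀ y : ℝ, 0 ≤ y →
      Summable (fun n : ℕ => |DTiter V n x y|) ∧
      |∑' n : ℕ, DTiter V n x y| ≤ Real.exp (gammaOne V x) * ∫ t in Set.Ioi (x + y), |V t| := by
  intro x _ y hy
  have hV' := (integrable_mul_abs_iff (by fun_prop) hV.aestronglyMeasurable).mp hV1
  exact DT_series_bound_general hV'.integrableOn hy
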